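/- G₂ cancellation (the consistency of the scattering diagram for X_{IV} in Section 7 of the paper): the composite 𝒦_{(0,−1),3} ∘ 𝒦_{(1,0),1} ∘ 𝒦_{(1,1),3} ∘ 𝒦_{(2,3),1} ∘ 𝒦_{(1,2),3} ∘ 𝒦_{(1,3),1} ∘ 𝒦_{(0,1),3} ∘ 𝒦_{(−1,0),1} of the eight wall-crossing automorphisms of K = ℂ(x,y) (with wall function (1+z^{γ_i}) for i odd and (1+z^{γ_i})³ for i even, where γ₁ = (−1,0), γ₂ = (0,1), γ₃ = (1,3), γ₄ = (1,2), γ₅ = (2,3), γ₆ = (1,1), γ₇ = (1,0), γ₈ = (0,−1)) sends x ↦ xy³ and y ↦ x^{−1}y^{−2}; equivalently it sends z^μ ↦ z^{M^{−1}μ} for every μ ∈ ℤ², where M : ℤ² → ℤ² is the monodromy with M(1,0) = (−2,−3) and M(0,1) = (1,1). -/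

import Mathlib

open MvPolynomial

noncomputable section

/-- `K = ℂ(x,y)`, the field of rational functions in two variables over `ℂ`. -/
abbrev K : Type := FractionRing (MvPolynomial (Fin 2) ℂ)

/-- The rational function `x`. -/
noncomputable def xx : K := algebraMap (MvPolynomial (Fin 2) ℂ) K (X 0)

/-- The rational function `y`. -/
noncomputable def yy : K := algebraMap (MvPolynomial (Fin 2) ℂ) K (X 1)

/-- `z^μ = x^m y^n` for `μ = (m,n) ∈ ℤ²`. -/
noncomputable def zmon (μ : ℤ × ℤ) : K := xx ^ μ.1 * yy ^ μ.2

/-- `⟨μ,γ⟩ = m b − n a` for `μ = (m,n)`, `γ = (a,b)`. -/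
def pairing (μ γ : ℤ × ℤ) : ℤ := μ.1 * γ.2 - μ.2 * γ.1

/-- `Φ` is the wall-crossing transformation `𝒦_{γ,d}`: the `ℂ`-algebra automorphism of `K`
satisfying `𝒦_{γ,d}(z^μ) = z^μ (1+z^γ)^{d⟨μ,γ⟩}` for all `μ ∈ ℤ²`. -/
def IsWallCrossing (d : ℤ) (γ : ℤ × ℤ) (Φ : K ≃ₐ[ℂ] K) : Prop :=
  ∀ μ : ℤ × ℤ, Φ (zmon μ) = zmon μ * (1 + zmon γ) ^ (d * pairing μ γ)

lemma nz_of_eval (p : MvPolynomial (Fin 2) ℂ) (h : MvPolynomial.eval (fun _ => (1 : ℂ)) p ≠ 0) :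
    algebraMap (MvPolynomial (Fin 2) ℂ) K p ≠ 0 := by
  intro h0
  apply h
  have hp : p = 0 := (IsFractionRing.injective (MvPolynomial (Fin 2) ℂ) K) (by rw [h0, map_zero])
  rw [hp, map_zero]

lemma xx_ne : xx ≠ 0 := nz_of_eval _ (by simp)

lemma yy_ne : yy ≠ 0 := nz_of_eval _ (by simp)

lemma wall_step (d a b : ℤ) (Φ : K ≃ₐ[ℂ] K) (h : IsWallCrossing d (a, b) Φ) (A : K ≃ₐ[ℂ] K)
    (U V f : K) (hx : A xx = U) (hy : A yy = V) (hf : 1 + U ^ a * V ^ b = f) :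
    (Φ.trans A) xx = U * f ^ (d * b) ∧ (Φ.trans A) yy = V * f ^ (-(d * a)) := by
  have e1 := h (1, 0)
  have e2 := h (0, 1)
  simp only [zmon, pairing, zpow_one, zpow_zero, mul_one, one_mul, zero_mul, sub_zero, zero_sub]
    at e1 e2
  constructor
  · rw [AlgEquiv.trans_apply, e1]
    simp only [map_mul, map_zpow₀, map_add, map_one, hx, hy, hf]
  · rw [AlgEquiv.trans_apply, e2]
    simp only [map_mul, map_zpow₀, map_add, map_one, hx, hy, hf, mul_neg]

/-- G₂ cancellation: the composite
`𝒦_{(0,−1),3} ∘ 𝒦_{(1,0),1} ∘ 𝒦_{(1,1),3} ∘ 𝒦_{(2,3),1} ∘ 𝒦_{(1,2),3} ∘ 𝒦_{(1,3),1} ∘ 𝒦_{(0,1),3} ∘ 𝒦_{(−1,0),1}`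
sends `z^μ ↦ z^{M⁻¹μ}` for every `μ ∈ ℤ²`, where `M(1,0) = (−2,−3)`, `M(0,1) = (1,1)`,
so `M⁻¹(m,n) = (m−n, 3m−2n)`; in particular `x ↦ xy³` and `y ↦ x⁻¹y⁻²`. -/
theorem G2_cancellation
    (K1 K2 K3 K4 K5 K6 K7 K8 : K ≃ₐ[ℂ] K)
    (h1 : IsWallCrossing 1 (-1, 0) K1) (h2 : IsWallCrossing 3 (0, 1) K2)
    (h3 : IsWallCrossing 1 (1, 3) K3) (h4 : IsWallCrossing 3 (1, 2) K4)
    (h5 : IsWallCrossing 1 (2, 3) K5) (h6 : IsWallCrossing 3 (1, 1) K6)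
    (h7 : IsWallCrossing 1 (1, 0) K7) (h8 : IsWallCrossing 3 (0, -1) K8) :
    ∀ μ : ℤ × ℤ, K8 (K7 (K6 (K5 (K4 (K3 (K2 (K1 (zmon μ)))))))) =
      zmon (μ.1 - μ.2, 3 * μ.1 - 2 * μ.2) := by
  have hx := xx_ne
  have hy := yy_ne
  have hs : 1 + yy ≠ 0 := by
    have := nz_of_eval (1 + X 1) (by norm_num)
    simpa [xx, yy] using this
  have hP : (1 + yy) ^ 3 + xx * yy ^ 3 ≠ 0 := by
    have := nz_of_eval ((1 + X 1) ^ 3 + X 0 * X 1 ^ 3) (by norm_num)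
    simpa [xx, yy] using this
  have hQ : (1 + yy) ^ 2 + xx * yy ^ 3 ≠ 0 := by
    have := nz_of_eval ((1 + X 1) ^ 2 + X 0 * X 1 ^ 3) (by norm_num)
    simpa [xx, yy] using this
  have hR : (xx * yy ^ 3) ^ 2 + (2 + 3 * yy) * (xx * yy ^ 3) + (1 + yy) ^ 3 ≠ 0 := by
    have := nz_of_eval ((X 0 * X 1 ^ 3) ^ 2 + (2 + 3 * X 1) * (X 0 * X 1 ^ 3) + (1 + X 1) ^ 3)
      (by norm_num)
    simpa only [map_add, map_mul, map_pow, map_one, map_ofNat, xx, yy] using this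
  have hS : xx * yy ^ 3 + (1 + yy) ≠ 0 := by
    have := nz_of_eval (X 0 * X 1 ^ 3 + (1 + X 1)) (by norm_num)
    simpa [xx, yy] using this
  have hT : xx * yy ^ 3 + 1 ≠ 0 := by
    have := nz_of_eval (X 0 * X 1 ^ 3 + 1) (by norm_num)
    simpa [xx, yy] using this
  have ht : xx * yy ^ 3 ≠ 0 := mul_ne_zero hx (pow_ne_zero _ hy)
  obtain ⟨t, et⟩ : ∃ t, t = xx * yy ^ 3 := ⟨_, rfl⟩
  obtain ⟨s, es⟩ : ∃ s, s = 1 + yy := ⟨_, rfl⟩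
  rw [← et] at hP hQ hR hS hT ht
  rw [← es] at hs hP hQ hR hS
  obtain ⟨P, eP⟩ : ∃ P, P = s ^ 3 + t := ⟨_, rfl⟩
  obtain ⟨Q, eQ⟩ : ∃ Q, Q = s ^ 2 + t := ⟨_, rfl⟩
  obtain ⟨R, eR⟩ : ∃ R, R = t ^ 2 + (2 + 3 * yy) * t + s ^ 3 := ⟨_, rfl⟩
  obtain ⟨S, eS⟩ : ∃ S, S = t + s := ⟨_, rfl⟩
  obtain ⟨T, eT⟩ : ∃ T, T = t + 1 := ⟨_, rfl⟩
  rw [← eP] at hP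
  rw [← eQ] at hQ
  rw [← eR] at hR
  rw [← eS] at hS
  rw [← eT] at hT
  have r7 : s ^ 3 + t = P := eP.symm
  have r6 : P + t * yy = s * Q := by rw [eP, eQ, es]; ring
  have r5 : Q ^ 3 + t ^ 2 * yy ^ 3 = P * R := by rw [eP, eQ, eR, es]; ring
  have r4 : R + t * yy ^ 2 = Q * S := by rw [eQ, eR, eS, es]; ring
  have r3 : S ^ 3 + t * yy ^ 3 = R * T := by rw [eR, eS, eT, es]; ring
  have r2 : T + yy = S := by rw [eS, eT, es]; ring
  have f8 : 1 + (xx) ^ (0 : ℤ) * (yy) ^ (-1 : ℤ) = s / yy := by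
    rw [es]
    simp only [zpow_neg, zpow_ofNat, zpow_one, zpow_zero]
    field_simp
    try ring
  obtain ⟨u8, v8⟩ := wall_step 3 (0) (-1) K8 h8 (AlgEquiv.refl) _ _ _ (rfl : _ = xx) (rfl : _ = yy) f8
  have u8' : _ = t / s ^ 3 := u8.trans (by
    norm_num only [zpow_neg, zpow_ofNat, zpow_one, zpow_zero]
    rw [et]
    field_simp)
  have v8' : _ = yy := v8.trans (by
    norm_num only [zpow_neg, zpow_ofNat, zpow_one, zpow_zero]
    field_simp)
  have f7 : 1 + (t / s ^ 3) ^ (1 : ℤ) * (yy) ^ (0 : ℤ) = P / s ^ 3 := by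
    rw [← r7]
    simp only [zpow_neg, zpow_ofNat, zpow_one, zpow_zero]
    field_simp
    try ring
  obtain ⟨u7, v7⟩ := wall_step 1 (1) (0) K7 h7 (K8.trans (AlgEquiv.refl)) _ _ _ u8' v8' f7
  have u7' : _ = t / s ^ 3 := u7.trans (by
    norm_num only [zpow_neg, zpow_ofNat, zpow_one, zpow_zero]
    skip
    field_simp)
  have v7' : _ = yy * s ^ 3 / P := v7.trans (by
    norm_num only [zpow_neg, zpow_ofNat, zpow_one, zpow_zero]
    field_simp)
  have f6 : 1 + (t / s ^ 3) ^ (1 : ℤ) * (yy * s ^ 3 / P) ^ (1 : ℤ) = s * Q / P := by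
    rw [← r6]
    simp only [zpow_neg, zpow_ofNat, zpow_one, zpow_zero]
    field_simp
    try ring
  obtain ⟨u6, v6⟩ := wall_step 3 (1) (1) K6 h6 (K7.trans (K8.trans (AlgEquiv.refl))) _ _ _ u7' v7' f6
  have u6' : _ = t * Q ^ 3 / P ^ 3 := u6.trans (by
    norm_num only [zpow_neg, zpow_ofNat, zpow_one, zpow_zero]
    skip
    field_simp)
  have v6' : _ = yy * P ^ 2 / Q ^ 3 := v6.trans (by
    norm_num only [zpow_neg, zpow_ofNat, zpow_one, zpow_zero]
    field_simp)
  have f5 : 1 + (t * Q ^ 3 / P ^ 3) ^ (2 : ℤ) * (yy * P ^ 2 / Q ^ 3) ^ (3 : ℤ) = P * R / Q ^ 3 := by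
    rw [← r5]
    simp only [zpow_neg, zpow_ofNat, zpow_one, zpow_zero]
    field_simp
    try ring
  obtain ⟨u5, v5⟩ := wall_step 1 (2) (3) K5 h5 (K6.trans (K7.trans (K8.trans (AlgEquiv.refl)))) _ _ _ u6' v6' f5
  have u5' : _ = t * R ^ 3 / Q ^ 6 := u5.trans (by
    norm_num only [zpow_neg, zpow_ofNat, zpow_one, zpow_zero]
    skip
    field_simp)
  have v5' : _ = yy * Q ^ 3 / R ^ 2 := v5.trans (by
    norm_num only [zpow_neg, zpow_ofNat, zpow_one, zpow_zero]
    field_simp)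
  have f4 : 1 + (t * R ^ 3 / Q ^ 6) ^ (1 : ℤ) * (yy * Q ^ 3 / R ^ 2) ^ (2 : ℤ) = Q * S / R := by
    rw [← r4]
    simp only [zpow_neg, zpow_ofNat, zpow_one, zpow_zero]
    field_simp
    try ring
  obtain ⟨u4, v4⟩ := wall_step 3 (1) (2) K4 h4 (K5.trans (K6.trans (K7.trans (K8.trans (AlgEquiv.refl))))) _ _ _ u5' v5' f4
  have u4' : _ = t * S ^ 6 / R ^ 3 := u4.trans (by
    norm_num only [zpow_neg, zpow_ofNat, zpow_one, zpow_zero]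
    skip
    field_simp)
  have v4' : _ = yy * R / S ^ 3 := v4.trans (by
    norm_num only [zpow_neg, zpow_ofNat, zpow_one, zpow_zero]
    field_simp)
  have f3 : 1 + (t * S ^ 6 / R ^ 3) ^ (1 : ℤ) * (yy * R / S ^ 3) ^ (3 : ℤ) = R * T / S ^ 3 := by
    rw [← r3]
    simp only [zpow_neg, zpow_ofNat, zpow_one, zpow_zero]
    field_simp
    try ring
  obtain ⟨u3, v3⟩ := wall_step 1 (1) (3) K3 h3 (K4.trans (K5.trans (K6.trans (K7.trans (K8.trans (AlgEquiv.refl)))))) _ _ _ u4' v4' f3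
  have u3' : _ = t * T ^ 3 / S ^ 3 := u3.trans (by
    norm_num only [zpow_neg, zpow_ofNat, zpow_one, zpow_zero]
    skip
    field_simp)
  have v3' : _ = yy / T := v3.trans (by
    norm_num only [zpow_neg, zpow_ofNat, zpow_one, zpow_zero]
    field_simp)
  have f2 : 1 + (t * T ^ 3 / S ^ 3) ^ (0 : ℤ) * (yy / T) ^ (1 : ℤ) = S / T := by
    rw [← r2]
    simp only [zpow_neg, zpow_ofNat, zpow_one, zpow_zero]
    field_simp
    try ring
  obtain ⟨u2, v2⟩ := wall_step 3 (0) (1) K2 h2 (K3.trans (K4.trans (K5.trans (K6.trans (K7.trans (K8.trans (AlgEquiv.refl))))))) _ _ _ u3' v3' f2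
  have u2' : _ = t := u2.trans (by
    norm_num only [zpow_neg, zpow_ofNat, zpow_one, zpow_zero]
    skip
    field_simp)
  have v2' : _ = yy / T := v2.trans (by
    norm_num only [zpow_neg, zpow_ofNat, zpow_one, zpow_zero]
    field_simp)
  have f1 : 1 + (t) ^ (-1 : ℤ) * (yy / T) ^ (0 : ℤ) = T / t := by
    rw [eT]
    simp only [zpow_neg, zpow_ofNat, zpow_one, zpow_zero]
    field_simp
    try ring
  obtain ⟨u1, v1⟩ := wall_step 1 (-1) (0) K1 h1 (K2.trans (K3.trans (K4.trans (K5.trans (K6.trans (K7.trans (K8.trans (AlgEquiv.refl)))))))) _ _ _ u2' v2' f1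
  have u1' : _ = t := u1.trans (by
    norm_num only [zpow_neg, zpow_ofNat, zpow_one, zpow_zero]
    skip
    field_simp)
  have v1' : _ = yy / t := v1.trans (by
    norm_num only [zpow_neg, zpow_ofNat, zpow_one, zpow_zero]
    field_simp)
  intro μ
  have key : ∀ w : K, K8 (K7 (K6 (K5 (K4 (K3 (K2 (K1 w))))))) = (K1.trans (K2.trans (K3.trans (K4.trans (K5.trans (K6.trans (K7.trans (K8.trans (AlgEquiv.refl))))))))) w := fun w => rfl
  rw [key]
  have eY : yy / t = xx⁻¹ * (yy ^ 2)⁻¹ := by rw [et]; field_simp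
  rw [zmon, map_mul, map_zpow₀, map_zpow₀, u1', v1', eY, et, zmon]
  simp only [mul_zpow, inv_zpow', ← zpow_natCast, ← zpow_mul, zpow_sub₀ hx, zpow_sub₀ hy, zpow_neg]
  push_cast
  field_simp

end
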